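/- The two-variable quaternionic Mahler measure of x² − y² vanishes: ∫_{T¹(ℍ)×T¹(ℍ)} log|x² − y²| d(μ⊗μ)(x,y) = 0. -/

import Mathlib

open MeasureTheory Quaternion

noncomputable instance : MeasurableSpace (Quaternion ℝ) := borel _
instance : BorelSpace (Quaternion ℝ) := ⟨rfl⟩
instance : Nonempty (Metric.sphere (0 : Quaternion ℝ) 1) := ⟨⟨1, by simp⟩⟩

/-- The probability Haar measure `μ` on the group `T¹(ℍ)` of unit quaternions
(the Haar measure normalized so that the whole group has measure `1`). -/
noncomputable def muH : Measure (Metric.sphere (0 : Quaternion ℝ) 1) :=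
  Measure.haarMeasure ⊤

/-- The quaternionic Mahler measure `m_ℍ(f) = ∫_{T¹(ℍ)} log |f(q)| dμ(q)`. -/
noncomputable def mahlerH (f : Quaternion ℝ → Quaternion ℝ) : ℝ :=
  ∫ q : Metric.sphere (0 : Quaternion ℝ) 1, Real.log ‖f q‖ ∂muH
/-- The two-variable quaternionic Mahler measure
`m_ℍ(f) = ∫_{T¹(ℍ)×T¹(ℍ)} log |f(x,y)| d(μ⊗μ)(x,y)`. -/
noncomputable def mahlerH2 (f : Quaternion ℝ → Quaternion ℝ → Quaternion ℝ) : ℝ :=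
  ∫ p : (Metric.sphere (0 : Quaternion ℝ) 1) × (Metric.sphere (0 : Quaternion ℝ) 1),
    Real.log ‖f p.1 p.2‖ ∂(muH.prod muH)

open Set Filter Asymptotics
open scoped Topology Real Pointwise

/-- The weight `exp (-r ^ 2)` has Mellin transform `Γ (s / 2) / 2`, and its logarithmic moments are
obtained by differentiating in `s`. -/
lemma hasLogMoment_gaussian {s : ℝ} (hs : 0 < s) :
    IntegrableOn (fun r : ℝ => r ^ (s - 1) * (Real.log r * Real.exp (-r ^ 2))) (Ioi 0) ∧
      ∫ r in Ioi (0 : ℝ), r ^ (s - 1) * (Real.log r * Real.exp (-r ^ 2)) =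
        deriv Real.Gamma (s / 2) / 4 := by
  have hcont : Continuous fun r : ℝ => ((Real.exp (-r ^ 2) : ℝ) : ℂ) := by fun_prop
  obtain ⟨hconv, hderiv⟩ := mellin_hasDerivAt_of_isBigO_rpow (E := ℂ) (a := s + 1) (b := 0)
    (f := fun r : ℝ => ((Real.exp (-r ^ 2) : ℝ) : ℂ)) (s := (s : ℂ))
    (hcont.continuousOn.locallyIntegrableOn measurableSet_Ioi)
    (by
      rw [← isBigO_norm_left]
      simp_rw [Complex.norm_real, isBigO_norm_left]
      have h₁ := (exp_neg_mul_sq_isLittleO_exp_neg (b := 1) one_pos).isBigO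
      have h₂ := (isLittleO_exp_neg_mul_rpow_atTop zero_lt_one (-(s + 1))).isBigO
      simpa only [neg_one_mul] using h₁.trans (by simpa only [neg_one_mul] using h₂))
    (by simp)
    (by
      simp_rw [neg_zero, Real.rpow_zero]
      refine isBigO_const_of_tendsto (?_ : Tendsto _ _ (𝓝 (1 : ℂ))) one_ne_zero
      simpa using (hcont.tendsto 0).mono_left nhdsWithin_le_nhds)
    (by simpa using hs)
  have hterm : ∀ (g : ℝ → ℝ) (u : ℝ), ∀ r ∈ Ioi (0 : ℝ),
      (r : ℂ) ^ ((u : ℂ) - 1) • ((g r : ℝ) : ℂ) = ((r ^ (u - 1) * g r : ℝ) : ℂ) := by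
    intro g u r hr
    rw [smul_eq_mul, Complex.ofReal_mul, Complex.ofReal_cpow (le_of_lt hr)]
    push_cast
    rfl
  have hmellin : ∀ (g : ℝ → ℝ) (u : ℝ), mellin (fun r => ((g r : ℝ) : ℂ)) u =
      ((∫ r in Ioi (0 : ℝ), r ^ (u - 1) * g r : ℝ) : ℂ) := by
    intro g u
    rw [mellin, setIntegral_congr_fun measurableSet_Ioi (hterm g u)]
    exact integral_ofReal
  have hlog : (fun r : ℝ => Real.log r • ((Real.exp (-r ^ 2) : ℝ) : ℂ)) =
      fun r : ℝ => ((Real.log r * Real.exp (-r ^ 2) : ℝ) : ℂ) := by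
    ext r
    simp
  rw [hlog] at hconv hderiv
  refine ⟨?_, ?_⟩
  · have := (integrableOn_congr_fun
      (hterm (fun r => Real.log r * Real.exp (-r ^ 2)) s) measurableSet_Ioi).mp hconv
    exact this.re
  · rw [hmellin] at hderiv
    have h₁ := hderiv.real_of_complex
    simp only [Complex.ofReal_re] at h₁
    have h₂ : (fun u : ℝ => (mellin (fun r : ℝ => ((Real.exp (-r ^ 2) : ℝ) : ℂ)) u).re)
        =ᶠ[𝓝 s] fun u => 1 / 2 * Real.Gamma (u / 2) := by
      filter_upwards [lt_mem_nhds hs] with u hu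
      rw [hmellin, Complex.ofReal_re]
      have := integral_rpow_mul_exp_neg_rpow two_pos (by linarith : -1 < u - 1)
      simpa using this
    have h₃ : HasDerivAt (fun u => 1 / 2 * Real.Gamma (u / 2))
        (1 / 2 * (deriv Real.Gamma (s / 2) * (1 / 2))) s := by
      have hd : HasDerivAt Real.Gamma (deriv Real.Gamma (s / 2)) (s / 2) :=
        (Real.differentiableAt_Gamma fun m =>
          ((neg_nonpos.mpr m.cast_nonneg).trans_lt (half_pos hs)).ne').hasDerivAt
      exact (hd.comp s ((hasDerivAt_id s).div_const 2)).const_mul _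
    rw [(h₁.congr_of_eventuallyEq h₂.symm).unique h₃]
    ring

section Gaussian

variable {E F V : Type*}
  [NormedAddCommGroup E] [NormedSpace ℝ E] [FiniteDimensional ℝ E] [Nontrivial E]
  [MeasurableSpace E] [BorelSpace E]
  [NormedAddCommGroup F] [NormedSpace ℝ F] [FiniteDimensional ℝ F]
  [MeasurableSpace F] [BorelSpace F]
  [NormedAddCommGroup V] [NormedSpace ℝ V]
  [MeasurableSpace V] [BorelSpace V]

lemma integral_gaussian_pow {n : ℕ} (hn : 0 < n) :
    ∫ r in Ioi (0 : ℝ), r ^ (n - 1) * Real.exp (-r ^ 2) = Real.Gamma (n / 2) / 2 := by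
  have hn' : (0 : ℝ) < n := by exact_mod_cast hn
  have := integral_rpow_mul_exp_neg_rpow two_pos (by linarith : -1 < (n : ℝ) - 1)
  rw [show (n : ℝ) - 1 = ((n - 1 : ℕ) : ℝ) by push_cast [Nat.one_le_iff_ne_zero.2 hn.ne']; ring]
    at this
  simp only [Real.rpow_natCast, Real.rpow_ofNat] at this
  rw [this]
  push_cast [Nat.one_le_iff_ne_zero.2 hn.ne']
  ring_nf

/-- The expected value of `log ‖v‖` under the Gaussian weight on an `n`-dimensional normed space
is `Γ' (n / 2) / (2 Γ (n / 2))`. -/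
noncomputable def gaussianLog (n : ℕ) : ℝ := deriv Real.Gamma (n / 2) / (2 * Real.Gamma (n / 2))

lemma integrable_gaussian_norm [FiniteDimensional ℝ V] (ν : Measure V) [ν.IsAddHaarMeasure] :
    Integrable (fun v : V => Real.exp (-‖v‖ ^ 2)) ν := by
  rcases subsingleton_or_nontrivial V with h | h
  · have : IsFiniteMeasure ν := ⟨isCompact_univ.measure_lt_top⟩
    exact (integrable_const 1).congr (Eventually.of_forall fun v => by simp [Subsingleton.elim v 0])
  · rw [integrable_fun_norm_addHaar ν (f := fun r => Real.exp (-r ^ 2))]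
    have hn := Module.finrank_pos (R := ℝ) (M := V)
    by_contra hc
    have := integral_gaussian_pow hn
    rw [integral_undef (by simpa [IntegrableOn] using hc)] at this
    have h0 := Real.Gamma_pos_of_pos (s := (Module.finrank ℝ V : ℝ) / 2) (by positivity)
    linarith

lemma integral_gaussian_norm_pos [FiniteDimensional ℝ V] (ν : Measure V) [ν.IsAddHaarMeasure] :
    0 < ∫ v, Real.exp (-‖v‖ ^ 2) ∂ν :=
  integral_exp_pos (integrable_gaussian_norm ν)

lemma integral_log_norm_gaussian (ν : Measure E) [ν.IsAddHaarMeasure] :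
    Integrable (fun v : E => Real.log ‖v‖ * Real.exp (-‖v‖ ^ 2)) ν ∧
      ∫ v, Real.log ‖v‖ * Real.exp (-‖v‖ ^ 2) ∂ν =
        gaussianLog (Module.finrank ℝ E) * ∫ v, Real.exp (-‖v‖ ^ 2) ∂ν := by
  have hn := Module.finrank_pos (R := ℝ) (M := E)
  obtain ⟨h₁, h₂⟩ := hasLogMoment_gaussian (s := Module.finrank ℝ E) (by exact_mod_cast hn)
  rw [show (Module.finrank ℝ E : ℝ) - 1 = ((Module.finrank ℝ E - 1 : ℕ) : ℝ) by
    push_cast [Nat.one_le_iff_ne_zero.2 hn.ne']; ring] at h₁ h₂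
  simp only [Real.rpow_natCast] at h₁ h₂
  refine ⟨?_, ?_⟩
  · rw [integrable_fun_norm_addHaar ν (f := fun r => Real.log r * Real.exp (-r ^ 2))]
    exact h₁
  · rw [integral_fun_norm_addHaar ν fun r => Real.log r * Real.exp (-r ^ 2),
      integral_fun_norm_addHaar ν fun r => Real.exp (-r ^ 2)]
    simp only [smul_eq_mul, nsmul_eq_mul]
    rw [h₂, integral_gaussian_pow hn, gaussianLog]
    have h0 := Real.Gamma_pos_of_pos (s := (Module.finrank ℝ E : ℝ) / 2) (by positivity)
    field_simp
    ring

/-- If `L` splits `V` orthogonally as `E × F`, then the first component of a Gaussian vector of `V`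
is a Gaussian vector of `E`. -/
lemma integral_log_norm_fst_gaussian (ν : Measure V) [ν.IsAddHaarMeasure] (L : V ≃L[ℝ] E × F)
    (hL : ∀ v, ‖v‖ ^ 2 = ‖(L v).1‖ ^ 2 + ‖(L v).2‖ ^ 2) :
    Integrable (fun v : V => Real.log ‖(L v).1‖ * Real.exp (-‖v‖ ^ 2)) ν ∧
      ∫ v, Real.log ‖(L v).1‖ * Real.exp (-‖v‖ ^ 2) ∂ν =
        gaussianLog (Module.finrank ℝ E) * ∫ v, Real.exp (-‖v‖ ^ 2) ∂ν := by
  let α : Measure E := Measure.addHaar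
  let β : Measure F := Measure.addHaar
  obtain ⟨hint, hval⟩ := integral_log_norm_gaussian α
  have hemb : MeasurableEmbedding L := L.toHomeomorph.measurableEmbedding
  obtain ⟨c, hc⟩ : ∃ c : NNReal, ν.map L = c • α.prod β :=
    ⟨_, Measure.isAddLeftInvariant_eq_smul (ν.map L) (α.prod β)⟩
  have hsplit : ∀ v, Real.exp (-‖v‖ ^ 2) =
      Real.exp (-‖(L v).1‖ ^ 2) * Real.exp (-‖(L v).2‖ ^ 2) := by
    intro v
    rw [hL, ← Real.exp_add]
    ring_nf
  simp_rw [hsplit, ← mul_assoc]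
  refine ⟨?_, ?_⟩
  · have : Integrable (fun p : E × F => Real.log ‖p.1‖ * Real.exp (-‖p.1‖ ^ 2) *
        Real.exp (-‖p.2‖ ^ 2)) (ν.map L) := by
      rw [hc]
      exact (hint.mul_prod (integrable_gaussian_norm β)).smul_measure_nnreal
    exact (hemb.integrable_map_iff).mp this
  · rw [← hemb.integral_map (fun p : E × F => Real.log ‖p.1‖ * Real.exp (-‖p.1‖ ^ 2) *
        Real.exp (-‖p.2‖ ^ 2)), ← hemb.integral_map (fun p : E × F => Real.exp (-‖p.1‖ ^ 2) *
        Real.exp (-‖p.2‖ ^ 2)), hc, integral_smul_nnreal_measure, integral_smul_nnreal_measure,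
      integral_prod_mul (fun v : E => Real.log ‖v‖ * Real.exp (-‖v‖ ^ 2))
        (fun w : F => Real.exp (-‖w‖ ^ 2)),
      integral_prod_mul (fun v : E => Real.exp (-‖v‖ ^ 2)) (fun w : F => Real.exp (-‖w‖ ^ 2)), hval]
    simp only [NNReal.smul_def, smul_eq_mul]
    ring

/-- Polar coordinates for a radially constant function against the Gaussian weight. -/
lemma integral_radially_constant_gaussian [FiniteDimensional ℝ V] (ν : Measure V)
    [ν.IsAddHaarMeasure] {H : V → ℝ}
    (hH : ∀ (r : ℝ) (v : V), 0 < r → H (r • v) = H v)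
    (hint : Integrable (fun v => H v * Real.exp (-‖v‖ ^ 2)) ν) :
    Integrable (fun s : Metric.sphere (0 : V) 1 => H s) ν.toSphere ∧
      (∫ s : Metric.sphere (0 : V) 1, H s ∂ν.toSphere) * ∫ v, Real.exp (-‖v‖ ^ 2) ∂ν =
        ν.toSphere.real univ * ∫ v, H v * Real.exp (-‖v‖ ^ 2) ∂ν := by
  rcases subsingleton_or_nontrivial V with h | h
  · have : ν.toSphere = 0 := ν.toSphere_eq_zero_iff.2 h
    simp [this]
  set N := Measure.volumeIoiPow (Module.finrank ℝ V - 1)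
  have hmp := ν.measurePreserving_homeomorphUnitSphereProd
  have hemb := (homeomorphUnitSphereProd V).measurableEmbedding
  have hpolar : ∀ (G : V → ℝ), (∀ (r : ℝ) (v : V), 0 < r → G (r • v) = G v) →
      (fun x : ({0}ᶜ : Set V) => G x * Real.exp (-‖(x : V)‖ ^ 2)) =
        (fun p : Metric.sphere (0 : V) 1 × Ioi (0 : ℝ) => G p.1 * Real.exp (-(p.2 : ℝ) ^ 2)) ∘
          homeomorphUnitSphereProd V := by
    intro G hG
    ext x
    have hx : 0 < ‖(x : V)‖ := norm_pos_iff.2 x.2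
    simp [hG _ _ (inv_pos.2 hx)]
  have hintegral : ∀ (G : V → ℝ), (∀ (r : ℝ) (v : V), 0 < r → G (r • v) = G v) →
      ∫ v, G v * Real.exp (-‖v‖ ^ 2) ∂ν =
        (∫ s : Metric.sphere (0 : V) 1, G s ∂ν.toSphere) *
          ∫ r : Ioi (0 : ℝ), Real.exp (-(r : ℝ) ^ 2) ∂N := by
    intro G hG
    rw [← integral_prod_mul, ← hmp.integral_comp hemb]
    calc ∫ v, G v * Real.exp (-‖v‖ ^ 2) ∂ν
        = ∫ x : ({0}ᶜ : Set V), G x * Real.exp (-‖(x : V)‖ ^ 2) ∂(ν.comap (↑)) := by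
          rw [integral_subtype_comap (measurableSet_singleton _).compl
            fun v => G v * Real.exp (-‖v‖ ^ 2), restrict_compl_singleton]
      _ = _ := by
          rw [hpolar G hG]
          rfl
  have hone := hintegral (fun _ => 1) fun _ _ _ => rfl
  simp only [one_mul, integral_const, smul_eq_mul, mul_one] at hone
  refine ⟨?_, ?_⟩
  · have hprod : Integrable (fun p : Metric.sphere (0 : V) 1 × Ioi (0 : ℝ) =>
        H p.1 * Real.exp (-(p.2 : ℝ) ^ 2)) (ν.toSphere.prod N) := by
      rw [← hmp.integrable_comp_emb hemb, ← hpolar H hH]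
      have := hint.integrableOn (s := ({0}ᶜ : Set V))
      rwa [integrableOn_iff_comap_subtypeVal (measurableSet_singleton _).compl] at this
    have hN : N ≠ 0 := by
      intro h0
      rw [h0, integral_zero_measure, mul_zero] at hone
      exact (integral_gaussian_norm_pos ν).ne' hone
    have := ae_neBot.2 hN
    obtain ⟨r, hr⟩ := hprod.prod_left_ae.exists
    exact (integrable_mul_const_iff (Real.exp_pos (-(r : ℝ) ^ 2)).ne'.isUnit _).mp hr
  · rw [hone, hintegral H hH]
    ring

/-- A proper subspace meets the unit sphere in a null set. -/
lemma toSphere_ae_notMem [FiniteDimensional ℝ V] (ν : Measure V) [ν.IsAddHaarMeasure]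
    {S : Submodule ℝ V} (hS : S ≠ ⊤) :
    ∀ᵐ s : Metric.sphere (0 : V) 1 ∂ν.toSphere, (s : V) ∉ S := by
  have hmeas : MeasurableSet {s : Metric.sphere (0 : V) 1 | (s : V) ∈ S} :=
    (S.closed_of_finiteDimensional.preimage continuous_subtype_val).measurableSet
  rw [ae_iff]
  simp only [not_not]
  rw [ν.toSphere_apply' hmeas]
  refine mul_eq_zero_of_right _ (measure_mono_null ?_ (ν.addHaar_submodule S hS))
  rintro _ ⟨r, -, _, ⟨s, hs, rfl⟩, rfl⟩
  exact S.smul_mem r hs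

/-- The average of `log` of the norm of an orthogonal projection over the unit sphere. -/
lemma integral_log_norm_fst_toSphere [FiniteDimensional ℝ V] (ν : Measure V)
    [ν.IsAddHaarMeasure] (L : V ≃L[ℝ] E × F)
    (hL : ∀ v, ‖v‖ ^ 2 = ‖(L v).1‖ ^ 2 + ‖(L v).2‖ ^ 2) :
    Integrable (fun s : Metric.sphere (0 : V) 1 => Real.log ‖(L s).1‖) ν.toSphere ∧
      ∫ s : Metric.sphere (0 : V) 1, Real.log ‖(L s).1‖ ∂ν.toSphere =
        ν.toSphere.real univ *
          (gaussianLog (Module.finrank ℝ E) - gaussianLog (Module.finrank ℝ V)) := by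
  have : Nontrivial V := L.toEquiv.nontrivial
  obtain ⟨i₁, v₁⟩ := integral_log_norm_fst_gaussian ν L hL
  obtain ⟨i₂, v₂⟩ := integral_log_norm_gaussian ν
  let H : V → ℝ := fun v => Real.log ‖(L (‖v‖⁻¹ • v)).1‖
  have hH : ∀ (r : ℝ) (v : V), 0 < r → H (r • v) = H v := by
    intro r v hr
    simp only [H, norm_smul, smul_smul, Real.norm_of_nonneg hr.le]
    congr 5
    field_simp
  let S : Submodule ℝ V := LinearMap.ker (LinearMap.fst ℝ E F ∘ₗ (L : V →ₗ[ℝ] E × F))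
  have hS : S ≠ ⊤ := by
    intro h
    obtain ⟨e, he⟩ := exists_ne (0 : E)
    have : L.symm (e, 0) ∈ S := h ▸ Submodule.mem_top
    simp [S, he] at this
  have hae : (fun v => H v * Real.exp (-‖v‖ ^ 2)) =ᵐ[ν] fun v =>
      Real.log ‖(L v).1‖ * Real.exp (-‖v‖ ^ 2) - Real.log ‖v‖ * Real.exp (-‖v‖ ^ 2) := by
    have : ∀ᵐ v ∂ν, v ∉ S := by
      rw [ae_iff]
      simpa using ν.addHaar_submodule S hS
    filter_upwards [this] with v hv
    have h₁ : (L v).1 ≠ 0 := by simpa [S] using hv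
    have h₂ : v ≠ 0 := by
      rintro rfl
      simp at h₁
    simp only [H, map_smul, Prod.smul_fst, norm_smul, norm_inv, norm_norm]
    rw [Real.log_mul (inv_ne_zero (norm_ne_zero_iff.2 h₂)) (norm_ne_zero_iff.2 h₁), Real.log_inv]
    ring
  have hHs : ∀ s : Metric.sphere (0 : V) 1, H s = Real.log ‖(L s).1‖ := fun s => by simp [H]
  obtain ⟨i₃, v₃⟩ := integral_radially_constant_gaussian ν hH ((i₁.sub i₂).congr hae.symm)
  rw [integral_congr_ae hae, integral_sub i₁ i₂, v₁, v₂] at v₃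
  simp only [hHs] at i₃ v₃
  refine ⟨i₃, mul_right_cancel₀ (integral_gaussian_norm_pos ν).ne' ?_⟩
  rw [v₃]
  ring

/-- Linear isometries preserve the surface measure of the unit sphere. -/
lemma map_toSphere_eq (ν : Measure V) (T : V ≃ₗᵢ[ℝ] V)
    (hT : MeasurePreserving T ν ν)
    {f : Metric.sphere (0 : V) 1 → Metric.sphere (0 : V) 1} (hf : ∀ s, (f s : V) = T s) :
    ν.toSphere.map f = ν.toSphere := by
  have hfm : Measurable f := by
    refine (Topology.IsEmbedding.subtypeVal.continuous_iff.2 ?_).measurable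
    exact (T.continuous.comp continuous_subtype_val).congr fun s => (hf s).symm
  ext A hA
  rw [Measure.map_apply hfm hA, ν.toSphere_apply' hA, ν.toSphere_apply' (hfm hA),
    ← hT.measure_preimage_emb T.toHomeomorph.measurableEmbedding
      (Ioo (0 : ℝ) 1 • (Subtype.val '' A))]
  congr 2
  ext v
  constructor
  · rintro ⟨r, hr, _, ⟨s, hs, rfl⟩, rfl⟩
    exact ⟨r, hr, _, ⟨f s, hs, rfl⟩, by simp [hf]⟩
  · rintro ⟨r, hr, _, ⟨a, ha, rfl⟩, hv⟩
    have hmem : T.symm a ∈ Metric.sphere (0 : V) 1 := by simp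
    have hfa : f ⟨T.symm a, hmem⟩ = a := Subtype.ext (by simp [hf])
    refine ⟨r, hr, _, ⟨⟨T.symm a, hmem⟩, by simpa [hfa] using ha, rfl⟩, ?_⟩
    apply T.injective
    simpa using hv

end Gaussian

/-- The isometric automorphism `x ↦ p * x * q` of `ℍ`, for unit quaternions `p` and `q`. -/
noncomputable def mulLeftRightIsometry (p q : Metric.sphere (0 : ℍ) 1) : ℍ ≃ₗᵢ[ℝ] ℍ :=
  LinearIsometry.toLinearIsometryEquiv
    { toLinearMap := LinearMap.mulLeftRight ℝ ((p : ℍ), (q : ℍ))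
      norm_map' := fun x => by simp } rfl

lemma mulLeftRightIsometry_apply (p q : Metric.sphere (0 : ℍ) 1) (x : ℍ) :
    mulLeftRightIsometry p q x = p * x * q := by
  simp [mulLeftRightIsometry]

lemma map_toSphere_mul_mul (p q : Metric.sphere (0 : ℍ) 1) :
    (volume : Measure ℍ).toSphere.map (fun x => p * x * q) = (volume : Measure ℍ).toSphere :=
  map_toSphere_eq volume (mulLeftRightIsometry p q) (LinearIsometryEquiv.measurePreserving _)
    fun s => by simp [mulLeftRightIsometry_apply]

lemma toSphere_univ_ne_zero : (volume : Measure ℍ).toSphere univ ≠ 0 := by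
  rw [Ne, Measure.measure_univ_eq_zero]
  exact Measure.toSphere_ne_zero _

lemma muH_eq_smul_toSphere :
    muH = ((volume : Measure ℍ).toSphere univ)⁻¹ • (volume : Measure ℍ).toSphere := by
  have : (volume : Measure ℍ).toSphere.IsMulLeftInvariant :=
    ⟨fun g => by simpa using map_toSphere_mul_mul g 1⟩
  have h := Measure.haarMeasure_unique (volume : Measure ℍ).toSphere ⊤
  rw [TopologicalSpace.PositiveCompacts.coe_top] at h
  have h0 := toSphere_univ_ne_zero
  nth_rewrite 2 [h]
  rw [smul_smul, ENNReal.inv_mul_cancel h0 (measure_ne_top _ _), one_smul, muH]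

instance : IsProbabilityMeasure muH := by
  refine ⟨?_⟩
  rw [muH, ← TopologicalSpace.PositiveCompacts.coe_top]
  exact Measure.haarMeasure_self

instance : muH.IsMulLeftInvariant := by
  rw [muH]
  infer_instance

lemma map_muH_mul_mul (p q : Metric.sphere (0 : ℍ) 1) :
    muH.map (fun x => p * x * q) = muH := by
  rw [muH_eq_smul_toSphere, Measure.map_smul, map_toSphere_mul_mul]

lemma integral_log_norm_fst_muH {E F : Type*}
    [NormedAddCommGroup E] [NormedSpace ℝ E] [FiniteDimensional ℝ E] [Nontrivial E]
    [MeasurableSpace E] [BorelSpace E]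
    [NormedAddCommGroup F] [NormedSpace ℝ F] [FiniteDimensional ℝ F]
    [MeasurableSpace F] [BorelSpace F] (L : ℍ ≃L[ℝ] E × F)
    (hL : ∀ v, ‖v‖ ^ 2 = ‖(L v).1‖ ^ 2 + ‖(L v).2‖ ^ 2) :
    Integrable (fun s : Metric.sphere (0 : ℍ) 1 => Real.log ‖(L s).1‖) muH ∧
      ∫ s : Metric.sphere (0 : ℍ) 1, Real.log ‖(L s).1‖ ∂muH =
        gaussianLog (Module.finrank ℝ E) - gaussianLog 4 := by
  obtain ⟨h₁, h₂⟩ := integral_log_norm_fst_toSphere volume L hL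
  have h0 := toSphere_univ_ne_zero
  have h0' : (volume : Measure ℍ).toSphere.real univ ≠ 0 :=
    ENNReal.toReal_ne_zero.2 ⟨h0, measure_ne_top _ _⟩
  rw [muH_eq_smul_toSphere]
  refine ⟨h₁.smul_measure (ENNReal.inv_ne_top.2 h0), ?_⟩
  rw [integral_smul_measure, h₂, ENNReal.toReal_inv, smul_eq_mul, ← measureReal_def,
    inv_mul_cancel_left₀ h0', Quaternion.finrank_eq_four]

lemma ae_muH_notMem {S : Submodule ℝ ℍ} (hS : S ≠ ⊤) :
    ∀ᵐ s : Metric.sphere (0 : ℍ) 1 ∂muH, (s : ℍ) ∉ S := by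
  rw [muH_eq_smul_toSphere]
  exact Measure.ae_smul_measure (toSphere_ae_notMem volume hS) _

lemma Quaternion.norm_sq_eq (a : ℍ) :
    ‖a‖ ^ 2 = a.re ^ 2 + a.imI ^ 2 + a.imJ ^ 2 + a.imK ^ 2 := by
  rw [sq, ← Quaternion.normSq_eq_norm_mul_self, Quaternion.normSq_def']

/-- The splitting of a quaternion into imaginary and real parts. -/
noncomputable def imReEquiv : ℍ ≃L[ℝ] EuclideanSpace ℝ (Fin 3) × ℝ :=
  LinearEquiv.toContinuousLinearEquiv
    { toFun := fun a => (!₂[a.imI, a.imJ, a.imK], a.re)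
      invFun := fun p => ⟨p.2, p.1 0, p.1 1, p.1 2⟩
      map_add' := fun a b => by
        ext i
        · fin_cases i <;> simp
        · simp
      map_smul' := fun c a => by
        ext i
        · fin_cases i <;> simp
        · simp
      left_inv := fun a => by ext <;> simp
      right_inv := fun p => by
        ext i
        · fin_cases i <;> simp
        · simp }

lemma imReEquiv_apply (a : ℍ) : imReEquiv a = (!₂[a.imI, a.imJ, a.imK], a.re) := rfl

lemma norm_imReEquiv_fst (a : ℍ) : ‖(imReEquiv a).1‖ = ‖a.im‖ := by
  rw [← sq_eq_sq₀ (norm_nonneg _) (norm_nonneg _), Quaternion.norm_sq_eq,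
    EuclideanSpace.norm_sq_eq]
  simp [imReEquiv_apply, Fin.sum_univ_three]

/-- The splitting `ℍ = ℂ ⊕ ℂ j`. -/
noncomputable def complexPairEquiv : ℍ ≃L[ℝ] ℂ × ℂ :=
  LinearEquiv.toContinuousLinearEquiv
    { toFun := fun a => (⟨a.re, a.imI⟩, ⟨a.imJ, a.imK⟩)
      invFun := fun p => ⟨p.1.re, p.1.im, p.2.re, p.2.im⟩
      map_add' := fun a b =>
        Prod.ext (Complex.ext (by simp) (by simp)) (Complex.ext (by simp) (by simp))
      map_smul' := fun c a =>
        Prod.ext (Complex.ext (by simp) (by simp)) (Complex.ext (by simp) (by simp))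
      left_inv := fun a => by ext <;> simp
      right_inv := fun p => by ext <;> simp }

lemma complexPairEquiv_apply (a : ℍ) :
    complexPairEquiv a = (⟨a.re, a.imI⟩, ⟨a.imJ, a.imK⟩) := rfl

lemma norm_sq_complexPairEquiv_fst (a : ℍ) :
    ‖(complexPairEquiv a).1‖ ^ 2 = a.re ^ 2 + a.imI ^ 2 := by
  rw [Complex.sq_norm, Complex.normSq_apply]
  simp [complexPairEquiv_apply, sq]

lemma integral_log_norm_im :
    Integrable (fun z : Metric.sphere (0 : ℍ) 1 => Real.log ‖(z : ℍ).im‖) muH ∧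
      ∫ z : Metric.sphere (0 : ℍ) 1, Real.log ‖(z : ℍ).im‖ ∂muH =
        gaussianLog 3 - gaussianLog 4 := by
  have := integral_log_norm_fst_muH imReEquiv fun v => by
    rw [norm_imReEquiv_fst, Quaternion.norm_sq_eq, Quaternion.norm_sq_eq]
    simp [imReEquiv_apply]
    ring
  simpa only [norm_imReEquiv_fst, finrank_euclideanSpace_fin] using this

lemma integral_log_norm_complexPart :
    Integrable (fun x : Metric.sphere (0 : ℍ) 1 => Real.log ‖(complexPairEquiv x).1‖) muH ∧
      ∫ x : Metric.sphere (0 : ℍ) 1, Real.log ‖(complexPairEquiv x).1‖ ∂muH =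
        gaussianLog 2 - gaussianLog 4 := by
  have := integral_log_norm_fst_muH complexPairEquiv fun v => by
    rw [norm_sq_complexPairEquiv_fst, Quaternion.norm_sq_eq, Complex.sq_norm, Complex.normSq_apply]
    simp [complexPairEquiv_apply]
    ring
  simpa only [Complex.finrank_real_complex] using this

lemma gaussianLog_sum : gaussianLog 2 + gaussianLog 3 - 2 * gaussianLog 4 = -Real.log 2 := by
  have h₂ : gaussianLog 2 = -Real.eulerMascheroniConstant / 2 := by
    simp [gaussianLog, Real.hasDerivAt_Gamma_one.deriv]
  have h₄ : gaussianLog 4 = (1 - Real.eulerMascheroniConstant) / 2 := by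
    have := Real.deriv_Gamma_nat 1
    norm_num at this
    rw [gaussianLog, show ((4 : ℕ) : ℝ) / 2 = 2 by norm_num, this, Real.Gamma_two]
    ring
  have h₃ : gaussianLog 3 = (2 - Real.eulerMascheroniConstant - 2 * Real.log 2) / 2 := by
    have hΓ : Real.Gamma (3 / 2) = √π / 2 := by
      rw [show (3 / 2 : ℝ) = 1 / 2 + 1 by norm_num, Real.Gamma_add_one (by norm_num),
        Real.Gamma_one_half_eq]
      ring
    have hd : HasDerivAt (fun s => Real.Gamma (s + 1)) (1 * Real.Gamma (1 / 2) +
        1 / 2 * (-√π * (Real.eulerMascheroniConstant + 2 * Real.log 2))) (1 / 2) := by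
      refine ((hasDerivAt_id _).mul Real.hasDerivAt_Gamma_one_half).congr_of_eventuallyEq ?_
      filter_upwards [lt_mem_nhds (by norm_num : (0 : ℝ) < 1 / 2)] with s hs
      simpa using Real.Gamma_add_one hs.ne'
    have hd' : deriv Real.Gamma (3 / 2) = deriv (fun s => Real.Gamma (s + 1)) (1 / 2) := by
      rw [deriv_comp_add_const]
      norm_num
    rw [hd.deriv, Real.Gamma_one_half_eq] at hd'
    rw [gaussianLog, show ((3 : ℕ) : ℝ) / 2 = 3 / 2 by norm_num, hd', hΓ]
    have : √π ≠ 0 := by positivity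
    field_simp
    ring
  rw [h₂, h₃, h₄]
  ring

/-- The quaternion unit `i`. -/
noncomputable def unitI : ℍ := ⟨0, 1, 0, 0⟩

@[simp] lemma unitI_re : unitI.re = 0 := rfl

@[simp] lemma unitI_imI : unitI.imI = 1 := rfl

@[simp] lemma unitI_imJ : unitI.imJ = 0 := rfl

@[simp] lemma unitI_imK : unitI.imK = 0 := rfl

/-- The quaternion unit `j`. -/
noncomputable def unitJ : ℍ := ⟨0, 0, 1, 0⟩

@[simp] lemma unitJ_re : unitJ.re = 0 := rfl

@[simp] lemma unitJ_imI : unitJ.imI = 0 := rfl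

@[simp] lemma unitJ_imJ : unitJ.imJ = 1 := rfl

@[simp] lemma unitJ_imK : unitJ.imK = 0 := rfl

open Classical in
/-- A quaternion, of norm one, which conjugates the direction of the imaginary part of `z`
to `i`. -/
noncomputable def imRotor (z : ℍ) : ℍ :=
  if z.im + ‖z.im‖ • unitI = 0 then unitJ
  else ‖z.im + ‖z.im‖ • unitI‖⁻¹ • (z.im + ‖z.im‖ • unitI)

lemma norm_imRotor (z : ℍ) : ‖imRotor z‖ = 1 := by
  unfold imRotor
  split_ifs with h
  · rw [← sq_eq_sq₀ (norm_nonneg _) zero_le_one, Quaternion.norm_sq_eq]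
    simp
  · rw [norm_smul, norm_inv, norm_norm, inv_mul_cancel₀ (norm_ne_zero_iff.2 h)]

lemma measurable_imRotor : Measurable imRotor := by
  have h : Measurable fun z : ℍ => z.im + ‖z.im‖ • unitI :=
    (Quaternion.continuous_im.add (Quaternion.continuous_im.norm.smul continuous_const)).measurable
  exact Measurable.ite (h (measurableSet_singleton 0)) measurable_const (h.norm.inv.smul h)

lemma imRotor_mul_im (z : ℍ) : imRotor z * z.im = ‖z.im‖ • (unitI * imRotor z) := by
  have hn : ‖z.im‖ ^ 2 = z.imI ^ 2 + z.imJ ^ 2 + z.imK ^ 2 := by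
    simp [Quaternion.norm_sq_eq]
  unfold imRotor
  split_ifs with h
  · have hI := congrArg QuaternionAlgebra.imI h
    have hJ := congrArg QuaternionAlgebra.imJ h
    have hK := congrArg QuaternionAlgebra.imK h
    simp at hI hJ hK
    ext <;> simp [hJ, hK]
    linarith
  · rw [mul_smul_comm, smul_mul_assoc, smul_comm]
    congr 1
    ext <;> simp <;> linarith

lemma norm_unitI_mul_add (x : ℍ) :
    ‖unitI * x + x * unitI‖ = 2 * ‖(complexPairEquiv x).1‖ := by
  rw [← sq_eq_sq₀ (norm_nonneg _) (by positivity), mul_pow, norm_sq_complexPairEquiv_fst,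
    Quaternion.norm_sq_eq]
  simp
  ring

lemma norm_sq_sub_mul_sq (x z : ℍ) (hx : ‖x‖ = 1) (hz : ‖z‖ = 1) :
    ‖x ^ 2 - (x * z) ^ 2‖ = ‖z.im * x + x * z.im‖ := by
  have hzz : z * star z = 1 := by
    rw [Quaternion.self_mul_star, Quaternion.normSq_eq_norm_mul_self, hz]
    simp
  have hre : star z * x - x * z = -(z.im * x + x * z.im) := by
    ext <;> simp <;> ring
  have : x ^ 2 - (x * z) ^ 2 = x * z * (star z * x - x * z) := by
    rw [mul_sub, ← mul_assoc, mul_assoc x z, hzz, mul_one, sq, sq]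
  rw [this, hre, norm_mul, norm_mul, norm_neg, hx, hz]
  simp

lemma norm_sq_sub_mul_sq_eq (x z g : ℍ) (hx : ‖x‖ = 1) (hz : ‖z‖ = 1)
    (hg : g = imRotor z) :
    ‖x ^ 2 - (x * z) ^ 2‖ = 2 * ‖z.im‖ * ‖(complexPairEquiv (g * x * g⁻¹)).1‖ := by
  have hn : ‖g‖ = 1 := hg ▸ norm_imRotor z
  have h0 : g ≠ 0 := norm_ne_zero_iff.1 (by simp [hn])
  have hconj : g * z.im = ‖z.im‖ • (unitI * g) := hg ▸ imRotor_mul_im z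
  have hconj' : z.im * g⁻¹ = ‖z.im‖ • (g⁻¹ * unitI) := by
    have : g⁻¹ * (g * z.im) * g⁻¹ = g⁻¹ * (‖z.im‖ • (unitI * g)) * g⁻¹ := by rw [hconj]
    rwa [inv_mul_cancel_left₀ h0, mul_smul_comm, smul_mul_assoc, mul_assoc, mul_assoc,
      mul_inv_cancel₀ h0, mul_one] at this
  have key : g * (z.im * x + x * z.im) * g⁻¹ =
      ‖z.im‖ • (unitI * (g * x * g⁻¹) + g * x * g⁻¹ * unitI) := by
    rw [mul_add, add_mul, ← mul_assoc g, hconj, ← mul_assoc g x, mul_assoc (g * x), hconj']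
    simp only [smul_mul_assoc, mul_smul_comm, smul_add, mul_assoc]
  have hnorm := congrArg norm key
  rw [norm_mul, norm_mul, norm_inv, hn, norm_smul, norm_norm, norm_unitI_mul_add] at hnorm
  rw [norm_sq_sub_mul_sq x z hx hz]
  linarith

lemma ae_im_ne_zero : ∀ᵐ z : Metric.sphere (0 : ℍ) 1 ∂muH, (z : ℍ).im ≠ 0 := by
  let S : Submodule ℝ ℍ :=
    LinearMap.ker (LinearMap.fst ℝ (EuclideanSpace ℝ (Fin 3)) ℝ ∘ₗ (imReEquiv : ℍ →ₗ[ℝ] _))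
  have hS : ∀ q : ℍ, q ∈ S ↔ q.im = 0 := by
    intro q
    rw [← norm_eq_zero, ← norm_imReEquiv_fst, norm_eq_zero]
    simp [S]
  have hne : S ≠ ⊤ := by
    intro h
    have hI := congrArg QuaternionAlgebra.imI ((hS unitI).1 (h ▸ Submodule.mem_top))
    simp at hI
  filter_upwards [ae_muH_notMem hne] with z hz using fun h => hz ((hS _).2 h)

lemma ae_complexPart_ne_zero :
    ∀ᵐ x : Metric.sphere (0 : ℍ) 1 ∂muH, (complexPairEquiv x).1 ≠ 0 := by
  let S : Submodule ℝ ℍ :=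
    LinearMap.ker (LinearMap.fst ℝ ℂ ℂ ∘ₗ (complexPairEquiv : ℍ →ₗ[ℝ] _))
  have hne : S ≠ ⊤ := by
    intro h
    have h1 : (1 : ℍ) ∈ S := h ▸ Submodule.mem_top
    have h2 := congrArg Complex.re (show (complexPairEquiv 1).1 = 0 from h1)
    simp [complexPairEquiv_apply] at h2
  filter_upwards [ae_muH_notMem hne] with x hx using hx

/-- the two-variable quaternionic Mahler measure of `x² - y²` vanishes. -/
theorem mahlerH2_sq_sub_sq : mahlerH2 (fun x y => x ^ 2 - y ^ 2) = 0 := by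
  let g : Metric.sphere (0 : ℍ) 1 → Metric.sphere (0 : ℍ) 1 := fun z =>
    ⟨imRotor z, by simp [norm_imRotor]⟩
  have hg : Measurable g := (measurable_imRotor.comp measurable_subtype_coe).subtype_mk
  have hshear := measurePreserving_prod_mul_swap muH muH
  have hconj : MeasurePreserving (fun p : Metric.sphere (0 : ℍ) 1 × Metric.sphere (0 : ℍ) 1 =>
      (p.1, g p.1 * p.2 * (g p.1)⁻¹)) (muH.prod muH) (muH.prod muH) := by
    refine (MeasurePreserving.id muH).skew_product (g := fun z x => g z * x * (g z)⁻¹) ?_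
      (Eventually.of_forall fun z => map_muH_mul_mul _ _)
    have h₁ : Measurable fun p : Metric.sphere (0 : ℍ) 1 × Metric.sphere (0 : ℍ) 1 => g p.1 :=
      hg.comp measurable_fst
    exact (h₁.mul measurable_snd).mul h₁.inv
  obtain ⟨i₁, v₁⟩ := integral_log_norm_im
  obtain ⟨i₂, v₂⟩ := integral_log_norm_complexPart
  let G : Metric.sphere (0 : ℍ) 1 × Metric.sphere (0 : ℍ) 1 → ℝ := fun p =>
    Real.log 2 + Real.log ‖(p.1 : ℍ).im‖ + Real.log ‖(complexPairEquiv p.2).1‖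
  have j₁ := i₁.comp_fst muH
  have j₂ := i₂.comp_snd muH
  have j₀ : Integrable (fun p : Metric.sphere (0 : ℍ) 1 × Metric.sphere (0 : ℍ) 1 =>
      Real.log 2 + Real.log ‖(p.1 : ℍ).im‖) (muH.prod muH) := (integrable_const _).add j₁
  have hG : Integrable G (muH.prod muH) := j₀.add j₂
  have hF : Measurable fun p : Metric.sphere (0 : ℍ) 1 × Metric.sphere (0 : ℍ) 1 =>
      Real.log ‖(p.1 : ℍ) ^ 2 - (p.2 : ℍ) ^ 2‖ :=
    Real.measurable_log.comp (Continuous.measurable (by fun_prop))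
  calc mahlerH2 (fun x y => x ^ 2 - y ^ 2)
      = ∫ p : Metric.sphere (0 : ℍ) 1 × Metric.sphere (0 : ℍ) 1,
          Real.log ‖(p.2 : ℍ) ^ 2 - ((p.2 : ℍ) * p.1) ^ 2‖ ∂(muH.prod muH) := by
        rw [mahlerH2]
        nth_rewrite 1 [← hshear.map_eq]
        rw [integral_map hshear.measurable.aemeasurable hF.aestronglyMeasurable]
        rfl
    _ = ∫ p, G (p.1, g p.1 * p.2 * (g p.1)⁻¹) ∂(muH.prod muH) := by
        refine integral_congr_ae ?_
        have h₁ := Measure.quasiMeasurePreserving_fst (μ := muH) (ν := muH) |>.ae ae_im_ne_zero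
        have h₂ := hconj.quasiMeasurePreserving.ae
          (Measure.quasiMeasurePreserving_snd (μ := muH) (ν := muH) |>.ae ae_complexPart_ne_zero)
        filter_upwards [h₁, h₂] with p hp₁ hp₂
        have hval : ((g p.1 * p.2 * (g p.1)⁻¹ : Metric.sphere (0 : ℍ) 1) : ℍ) =
            imRotor p.1 * p.2 * (imRotor p.1)⁻¹ := by simp [g]
        rw [norm_sq_sub_mul_sq_eq p.2 p.1 _ (by simp) (by simp) rfl]
        simp only [G]
        rw [← hval, Real.log_mul (by simpa using hp₁) (norm_ne_zero_iff.2 hp₂),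
          Real.log_mul two_ne_zero (norm_ne_zero_iff.2 hp₁)]
    _ = ∫ p, G p ∂(muH.prod muH) := by
        nth_rewrite 2 [← hconj.map_eq]
        rw [integral_map hconj.measurable.aemeasurable
          (by rw [hconj.map_eq]; exact hG.aestronglyMeasurable)]
    _ = Real.log 2 + (gaussianLog 3 - gaussianLog 4) + (gaussianLog 2 - gaussianLog 4) := by
        simp only [G]
        rw [integral_add j₀ j₂, integral_add (integrable_const _) j₁,
          integral_fun_fst (fun z : Metric.sphere (0 : ℍ) 1 => Real.log ‖(z : ℍ).im‖),
          integral_fun_snd (fun x : Metric.sphere (0 : ℍ) 1 =>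
            Real.log ‖(complexPairEquiv x).1‖), v₁, v₂]
        simp
    _ = 0 := by linarith [gaussianLog_sum]
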